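/- Let g₀, g₋₁ be finite-dimensional real vector spaces and d : g₋₁ → g₀ linear. For Θ ∈ Hom(g₀,g₋₁) and t ∈ ℝ define e^{tΘ} := ∑_{n=1}^∞ (tⁿ/n!) Θ∘(d∘Θ)^{n−1} ∈ Hom(g₀,g₋₁). Then for all s,t ∈ ℝ: e^{(t+s)Θ} = e^{tΘ} + e^{sΘ} + e^{tΘ}∘d∘e^{sΘ}; that is, t ↦ e^{tΘ} is a one-parameter subgroup for the multiplication τ ⋆ τ′ := τ + τ′ + τ∘d∘τ′ on Hom(g₀,g₋₁). Moreover id_{g₀} + d∘e^{tΘ} = exp(t·d∘Θ) and id_{g₋₁} + e^{tΘ}∘d = exp(t·Θ∘d), so each e^{tΘ} is ⋆-invertible. -/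

import Mathlib

open LinearMap

/-- The exponential `exp(X) m = ∑ Xⁿm/n!` of a linear endomorphism. -/
noncomputable def expv {M : Type*} [NormedAddCommGroup M] [NormedSpace ℝ M]
    (X : M →ₗ[ℝ] M) (m : M) : M :=
  ∑' n : ℕ, ((n.factorial : ℝ))⁻¹ • (X ^ n) m

/-- The series
`E(t)(x,y) = ∑_{n≥1} (tⁿ/n!) ∑_{i+j+k=n−1} C(i+j,i) X₁ᵏ l_X(X₀ⁱx, X₀ʲy)`. -/
noncomputable def Eser {g0 gm : Type*}
    [NormedAddCommGroup g0] [NormedSpace ℝ g0]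
    [NormedAddCommGroup gm] [NormedSpace ℝ gm]
    (X0 : g0 →ₗ[ℝ] g0) (X1 : gm →ₗ[ℝ] gm) (lX : g0 →ₗ[ℝ] g0 →ₗ[ℝ] gm)
    (t : ℝ) (x y : g0) : gm :=
  ∑' n : ℕ, (t ^ (n + 1) / ((n + 1).factorial : ℝ)) •
    ∑ c ∈ Finset.Nat.antidiagonalTuple 3 n,
      (((c 0 + c 1).choose (c 0) : ℝ)) •
        (X1 ^ (c 2)) (lX ((X0 ^ (c 0)) x) ((X0 ^ (c 1)) y))

/-- The series `e^{tΘ} = ∑_{n≥1} (tⁿ/n!) Θ∘(d∘Θ)^{n−1}`, applied to `x`. -/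
noncomputable def eTh {g0 gm : Type*}
    [NormedAddCommGroup g0] [NormedSpace ℝ g0]
    [NormedAddCommGroup gm] [NormedSpace ℝ gm]
    (d : gm →ₗ[ℝ] g0) (Θ : g0 →ₗ[ℝ] gm) (t : ℝ) (x : g0) : gm :=
  ∑' n : ℕ, (t ^ (n + 1) / ((n + 1).factorial : ℝ)) • Θ (((d ∘ₗ Θ) ^ n) x)

theorem expv_hasSum_aux {M : Type*} [NormedAddCommGroup M] [NormedSpace ℝ M]
    [FiniteDimensional ℝ M] (X : M →ₗ[ℝ] M) (m : M) :
    HasSum (fun n : ℕ => ((n.factorial : ℝ))⁻¹ • (X ^ n) m)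
      (NormedSpace.exp (LinearMap.toContinuousLinearMap X) m) := by
  have : CompleteSpace M := FiniteDimensional.complete ℝ M
  have h := NormedSpace.exp_series_hasSum_exp' (𝕂 := ℝ) (LinearMap.toContinuousLinearMap X)
  have h2 := (ContinuousLinearMap.apply ℝ M m).hasSum h
  change HasSum _ ((ContinuousLinearMap.apply ℝ M m) (NormedSpace.exp (LinearMap.toContinuousLinearMap X)))
  convert h2 using 2 with n
  have : ∀ n : ℕ, ((LinearMap.toContinuousLinearMap X) ^ n) m = (X ^ n) m := by
    intro n
    induction n with
    | zero => simp
    | succ k ih => rw [pow_succ', pow_succ']; simp [ih]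
  simp [this]

/-- The auxiliary endomorphism `(a, x) ↦ (Θ x, d Θ x)`. -/
noncomputable def auxN {g0 gm : Type*}
    [NormedAddCommGroup g0] [NormedSpace ℝ g0]
    [NormedAddCommGroup gm] [NormedSpace ℝ gm]
    (d : gm →ₗ[ℝ] g0) (Θ : g0 →ₗ[ℝ] gm) : (gm × g0) →ₗ[ℝ] (gm × g0) :=
  (Θ.prod (d ∘ₗ Θ)) ∘ₗ LinearMap.snd ℝ gm g0

theorem auxN_pow {g0 gm : Type*}
    [NormedAddCommGroup g0] [NormedSpace ℝ g0]
    [NormedAddCommGroup gm] [NormedSpace ℝ gm]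
    (d : gm →ₗ[ℝ] g0) (Θ : g0 →ₗ[ℝ] gm) (n : ℕ) (p : gm × g0) :
    ((auxN d Θ) ^ (n + 1)) p = (Θ (((d ∘ₗ Θ) ^ n) p.2), d (Θ (((d ∘ₗ Θ) ^ n) p.2))) := by
  induction n with
  | zero => simp [auxN]
  | succ k ih =>
    rw [pow_succ', Module.End.mul_apply, ih, pow_succ' (d ∘ₗ Θ)]
    simp [auxN]

theorem eTh_hasSum_aux {g0 gm : Type*}
    [NormedAddCommGroup g0] [NormedSpace ℝ g0] [FiniteDimensional ℝ g0]
    [NormedAddCommGroup gm] [NormedSpace ℝ gm] [FiniteDimensional ℝ gm]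
    (d : gm →ₗ[ℝ] g0) (Θ : g0 →ₗ[ℝ] gm) (t : ℝ) (x : g0) :
    HasSum (fun n : ℕ => (t ^ (n + 1) / ((n + 1).factorial : ℝ)) • Θ (((d ∘ₗ Θ) ^ n) x))
      (eTh d Θ t x) := by
  have h := expv_hasSum_aux (t • auxN d Θ) ((0 : gm), x)
  have h1 := ((hasSum_nat_add_iff' 1).2 h).mapL (ContinuousLinearMap.fst ℝ gm g0)
  refine Summable.hasSum (h1.summable.congr fun n => ?_)
  simp only [smul_pow, LinearMap.smul_apply, auxN_pow]
  simp [smul_smul, div_eq_inv_mul]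

theorem exp_auxN {g0 gm : Type*}
    [NormedAddCommGroup g0] [NormedSpace ℝ g0] [FiniteDimensional ℝ g0]
    [NormedAddCommGroup gm] [NormedSpace ℝ gm] [FiniteDimensional ℝ gm]
    (d : gm →ₗ[ℝ] g0) (Θ : g0 →ₗ[ℝ] gm) (t : ℝ) (a : gm) (x : g0) :
    NormedSpace.exp (LinearMap.toContinuousLinearMap (t • auxN d Θ)) (a, x)
      = (a + eTh d Θ t x, x + d (eTh d Θ t x)) := by
  have h := (hasSum_nat_add_iff' 1).2 (expv_hasSum_aux (t • auxN d Θ) (a, x))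
  have e := eTh_hasSum_aux d Θ t x
  have e2 := e.mapL (LinearMap.toContinuousLinearMap d)
  have e3 := e.prodMk e2
  have h4 := HasSum.unique (f := fun n : ℕ => (((n + 1).factorial : ℝ))⁻¹ •
    ((t • auxN d Θ) ^ (n + 1)) (a, x)) h (by
      convert e3 using 2 with n
      simp only [smul_pow, LinearMap.smul_apply, auxN_pow]
      simp [smul_smul, div_eq_inv_mul])
  rw [sub_eq_iff_eq_add] at h4
  rw [h4]
  simp [add_comm]

/-- `t ↦ e^{tΘ}` is a one-parameter subgroup for `⋆`:
`e^{(t+s)Θ} = e^{tΘ} ⋆ e^{sΘ}`; moreover `id + d∘e^{tΘ} = exp(t·d∘Θ)` and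
`id + e^{tΘ}∘d = exp(t·Θ∘d)`, so each `e^{tΘ}` is ⋆-invertible. -/
theorem eTh_one_parameter_subgroup
    {g0 gm : Type*}
    [NormedAddCommGroup g0] [NormedSpace ℝ g0] [FiniteDimensional ℝ g0]
    [NormedAddCommGroup gm] [NormedSpace ℝ gm] [FiniteDimensional ℝ gm]
    (d : gm →ₗ[ℝ] g0) (Θ : g0 →ₗ[ℝ] gm) :
    (∀ (s t : ℝ) (x : g0),
      eTh d Θ (t + s) x
        = eTh d Θ t x + eTh d Θ s x + eTh d Θ t (d (eTh d Θ s x))) ∧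
    (∀ (t : ℝ) (x : g0), x + d (eTh d Θ t x) = expv (t • (d ∘ₗ Θ)) x) ∧
    (∀ (t : ℝ) (a : gm), a + eTh d Θ t (d a) = expv (t • (Θ ∘ₗ d)) a) ∧
    (∀ t : ℝ, ∃ τ' : g0 →ₗ[ℝ] gm,
      (∀ x : g0, eTh d Θ t x + τ' x + eTh d Θ t (d (τ' x)) = 0) ∧
      (∀ x : g0, τ' x + eTh d Θ t x + τ' (d (eTh d Θ t x)) = 0)) := by
  have lin : ∀ t : ℝ, ∃ L : g0 →ₗ[ℝ] gm, ∀ x, L x = eTh d Θ t x := fun t =>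
    ⟨LinearMap.fst ℝ gm g0 ∘ₗ
      (NormedSpace.exp (LinearMap.toContinuousLinearMap (t • auxN d Θ))).toLinearMap ∘ₗ
      LinearMap.inr ℝ gm g0, fun x => by
        have h := congrArg Prod.fst (exp_auxN d Θ t 0 x)
        rw [zero_add] at h
        exact h⟩
  have add : ∀ (s t : ℝ) (x : g0),
      eTh d Θ (t + s) x
        = eTh d Θ t x + eTh d Θ s x + eTh d Θ t (d (eTh d Θ s x)) := by
    intro s t x
    have : CompleteSpace (gm × g0) := FiniteDimensional.complete ℝ _
    have h : NormedSpace.exp (LinearMap.toContinuousLinearMap ((t + s) • auxN d Θ))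
        = NormedSpace.exp (LinearMap.toContinuousLinearMap (t • auxN d Θ))
          * NormedSpace.exp (LinearMap.toContinuousLinearMap (s • auxN d Θ)) := by
      rw [add_smul, map_add, map_smul, map_smul]
      letI := NormedAlgebra.restrictScalars ℚ ℝ ((gm × g0) →L[ℝ] (gm × g0))
      exact NormedSpace.exp_add_of_commute
        (((Commute.refl _).smul_left t).smul_right s)
    have h2 := congrArg (fun F => (F ((0 : gm), x)).1) h
    simp only [mul_apply_eq_comp, exp_auxN] at h2
    obtain ⟨L, hL⟩ := lin t
    rw [← hL (x + _), map_add, hL, hL] at h2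
    rw [zero_add, zero_add] at h2
    rw [h2]; abel
  have zer : ∀ x, eTh d Θ 0 x = 0 := fun x => by simp [eTh]
  refine ⟨add, fun t x => ?_, fun t a => ?_, fun t => ?_⟩
  · have e2 := (eTh_hasSum_aux d Θ t x).mapL (LinearMap.toContinuousLinearMap d)
    have h := expv_hasSum_aux (t • (d ∘ₗ Θ)) x
    rw [expv, h.summable.tsum_eq_zero_add]
    have e3 := e2.tsum_eq
    simp only [LinearMap.coe_toContinuousLinearMap'] at e3
    rw [← e3]
    simp [smul_pow, smul_smul, div_eq_inv_mul, pow_succ' (d ∘ₗ Θ)]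
  · have h := expv_hasSum_aux (t • (Θ ∘ₗ d)) a
    rw [expv, h.summable.tsum_eq_zero_add, eTh]
    have key : ∀ n : ℕ, ((Θ ∘ₗ d) ^ (n + 1)) a = Θ (((d ∘ₗ Θ) ^ n) (d a)) := by
      intro n
      induction n with
      | zero => simp
      | succ k ih =>
        rw [pow_succ', Module.End.mul_apply, ih, pow_succ' (d ∘ₗ Θ)]
        simp
    simp [smul_pow, smul_smul, div_eq_inv_mul, key]
  · obtain ⟨L, hL⟩ := lin (-t)
    refine ⟨L, fun x => ?_, fun x => ?_⟩
    · rw [hL, ← add, add_neg_cancel, zer]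
    · rw [hL, hL, ← add, neg_add_cancel, zer]
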